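/- For integers m, n ≥ k ≥ 2, let A ∈ ℝ^{m×n} be the matrix with entries A_{ii} = k+1 for 1 ≤ i ≤ k, A_{ij} = k+1 whenever both i > k and j > k, and A_{ij} = −1 otherwise. Then the principal k×k submatrix A11 = A(1:k, 1:k) (the matrix with k+1 on the diagonal and −1 off the diagonal) is a local maximum volume k×k submatrix of A: det(A11) ≠ 0 and vol(Â11) ≤ vol(A11) for every k×k submatrix Â11 of A that differs from A11 in at most one row and at most one column. -/

import Mathlib

open Matrix

/-- The spectral norm (`‖·‖₂`, largest singular value) of a real matrix. -/
noncomputable def specNorm {m n : Type*} [Fintype m] [Fintype n] [DecidableEq n]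
    (A : Matrix m n ℝ) : ℝ :=
  ‖LinearMap.toContinuousLinearMap (Matrix.toEuclideanLin A)‖

/-- `sval A j` is the `j`-th largest singular value of `A` (1-indexed), characterized as the
distance, in the spectral norm, from `A` to the set of matrices of rank `< j`. -/
noncomputable def sval {m n : Type*} [Fintype m] [Fintype n] [DecidableEq n]
    (A : Matrix m n ℝ) (j : ℕ) : ℝ :=
  sInf {x : ℝ | ∃ B : Matrix m n ℝ, B.rank < j ∧ x = specNorm (A - B)}

/-- The volume of a matrix: the product of its singular values. -/
noncomputable def vol {m n : Type*} [Fintype m] [Fintype n] [DecidableEq n]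
    (A : Matrix m n ℝ) : ℝ :=
  ∏ j ∈ Finset.Icc 1 (min (Fintype.card m) (Fintype.card n)), sval A j

/-- `DiffOne b r` : `r` is an injective selection of indices whose image (index set)
differs from the index set selected by `b` in at most one element. -/
def DiffOne {ι α : Type*} [Fintype ι] [DecidableEq α] (b r : ι → α) : Prop :=
  Function.Injective r ∧ (Finset.univ.image r \ Finset.univ.image b).card ≤ 1

/-- The k×k pivot block of the example: k+1 on the diagonal, -1 off the diagonal. -/
noncomputable def egA11 (k : ℕ) : Matrix (Fin k) (Fin k) ℝ :=
  Matrix.of fun i j => if i = j then (k : ℝ) + 1 else -1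

/-- The example matrix: A_{ii} = k+1 for i ≤ k, A_{ij} = k+1 for i,j > k,
and A_{ij} = -1 otherwise (written in block form, m = k + m', n = k + n'). -/
noncomputable def egA (k m' n' : ℕ) : Matrix (Fin k ⊕ Fin m') (Fin k ⊕ Fin n') ℝ :=
  Matrix.fromBlocks (egA11 k) (Matrix.of fun _ _ => -1) (Matrix.of fun _ _ => -1)
    (Matrix.of fun _ _ => (k : ℝ) + 1)

/-!
By the Eckart–Young theorem, the distances to matrices of lower rank that define `sval` are the
usual singular values, so the volume of a square matrix is the absolute value of its determinant.

All rows of `A` beyond the `k`-th coincide, and so do all columns beyond the `k`-th. A `k × k`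
submatrix that repeats one of them is singular; any other is, up to permutations, obtained by
deleting a row and a column from the `(k + 1) × (k + 1)` matrix `M = (k + 2) I - J`, where `J` is
the all-ones matrix. Its determinant is then, up to sign, an entry of `adj M`. As
`M (I + J) = (k + 2) I`, the adjugate is a nonzero multiple of `I + J`, whose largest entries are
those on the diagonal, and deleting the last row and column of `M` leaves `A11`.
-/

section EckartYoung

open Module

theorem exists_ne_zero_map_eq_zero_of_finrank_range_le {K V W : Type*} [DivisionRing K]
    [AddCommGroup V] [Module K V] [AddCommGroup W] [Module K W] {n : ℕ}
    (b : Basis (Fin n) K V) (S : V →ₗ[K] W) {i : Fin n} (hS : finrank K S.range ≤ i) :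
    ∃ x ≠ 0, S x = 0 ∧ ∀ j, i < j → b.repr x j = 0 := by
  have : FiniteDimensional K V := b.finiteDimensional_of_finite
  let φ : V →ₗ[K] S.range × (Finset.Ioi i → K) :=
    S.rangeRestrict.prod (LinearMap.pi fun j ↦ b.coord j)
  have hφ : finrank K (S.range × (Finset.Ioi i → K)) < finrank K V := by
    rw [finrank_prod, finrank_fintype_fun_eq_card, Fintype.card_coe, Fin.card_Ioi,
      finrank_eq_card_basis b, Fintype.card_fin]
    omega
  obtain ⟨x, hx, hx0⟩ :=
    Submodule.exists_mem_ne_zero_of_ne_bot (LinearMap.ker_ne_bot_of_finrank_lt (f := φ) hφ)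
  have hSx : S.rangeRestrict x = 0 := congrArg Prod.fst (LinearMap.mem_ker.mp hx)
  have hbx (j : Finset.Ioi i) : b.repr x j = 0 :=
    congrFun (congrArg Prod.snd (LinearMap.mem_ker.mp hx)) j
  exact ⟨x, hx0, congrArg Subtype.val hSx, fun j hj ↦ hbx ⟨j, Finset.mem_Ioi.mpr hj⟩⟩

variable {𝕜 E F : Type*} [RCLike 𝕜] [NormedAddCommGroup E] [InnerProductSpace 𝕜 E]
  [FiniteDimensional 𝕜 E] [NormedAddCommGroup F] [InnerProductSpace 𝕜 F] [FiniteDimensional 𝕜 F]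

/-- An orthonormal basis of right singular vectors of `T`: eigenvectors of `T† T`, ordered by
decreasing singular value. -/
noncomputable def rightSingularBasis (T : E →ₗ[𝕜] F) :
    OrthonormalBasis (Fin (finrank 𝕜 E)) 𝕜 E :=
  T.isSymmetric_adjoint_comp_self.eigenvectorBasis rfl

variable (T : E →ₗ[𝕜] F)

theorem adjoint_comp_self_rightSingularBasis (j : Fin (finrank 𝕜 E)) :
    (T.adjoint ∘ₗ T) (rightSingularBasis T j) =
      ((T.singularValues j ^ 2 : ℝ) : 𝕜) • rightSingularBasis T j := by
  rw [T.sq_singularValues_fin rfl]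
  exact T.isSymmetric_adjoint_comp_self.apply_eigenvectorBasis rfl j

theorem norm_sq_map_eq_sum_singularValues (x : E) :
    ‖T x‖ ^ 2 = ∑ j : Fin (finrank 𝕜 E),
      T.singularValues j ^ 2 * ‖inner 𝕜 (rightSingularBasis T j) x‖ ^ 2 := by
  have hx (j : Fin (finrank 𝕜 E)) : inner 𝕜 (rightSingularBasis T j) ((T.adjoint ∘ₗ T) x) =
      ((T.singularValues j ^ 2 : ℝ) : 𝕜) * inner 𝕜 (rightSingularBasis T j) x := by
    rw [← T.isSymmetric_adjoint_comp_self, adjoint_comp_self_rightSingularBasis,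
      inner_smul_left, RCLike.conj_ofReal]
  rw [← RCLike.ofReal_inj (K := 𝕜)]
  calc ((‖T x‖ ^ 2 : ℝ) : 𝕜) = inner 𝕜 x ((T.adjoint ∘ₗ T) x) := by
        rw [LinearMap.comp_apply, LinearMap.adjoint_inner_right, inner_self_eq_norm_sq_to_K,
          RCLike.ofReal_pow]
    _ = ∑ j, inner 𝕜 x (rightSingularBasis T j) *
          inner 𝕜 (rightSingularBasis T j) ((T.adjoint ∘ₗ T) x) :=
        ((rightSingularBasis T).sum_inner_mul_inner x _).symm
    _ = _ := by
        rw [RCLike.ofReal_sum]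
        refine Finset.sum_congr rfl fun j _ ↦ ?_
        rw [hx, mul_left_comm, ← inner_conj_symm x, RCLike.conj_mul, RCLike.ofReal_mul,
          RCLike.ofReal_pow ‖_‖]

theorem norm_map_le_singularValues_mul {i : ℕ} {x : E}
    (hx : ∀ j : Fin (finrank 𝕜 E), (j : ℕ) < i → inner 𝕜 (rightSingularBasis T j) x = 0) :
    ‖T x‖ ≤ T.singularValues i * ‖x‖ := by
  refine le_of_sq_le_sq ?_ (mul_nonneg (T.singularValues_nonneg i) (norm_nonneg x))
  rw [mul_pow, norm_sq_map_eq_sum_singularValues, ← (rightSingularBasis T).sum_sq_norm_inner_right,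
    Finset.mul_sum]
  refine Finset.sum_le_sum fun j _ ↦ ?_
  obtain hj | hj := lt_or_ge (j : ℕ) i
  · simp [hx j hj]
  · gcongr
    · exact T.singularValues_nonneg j
    · exact T.singularValues_antitone hj

theorem singularValues_mul_le_norm_map {i : ℕ} {x : E}
    (hx : ∀ j : Fin (finrank 𝕜 E), i < j → inner 𝕜 (rightSingularBasis T j) x = 0) :
    T.singularValues i * ‖x‖ ≤ ‖T x‖ := by
  refine le_of_sq_le_sq ?_ (norm_nonneg _)
  rw [mul_pow, norm_sq_map_eq_sum_singularValues, ← (rightSingularBasis T).sum_sq_norm_inner_right,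
    Finset.mul_sum]
  refine Finset.sum_le_sum fun j _ ↦ ?_
  obtain hj | hj := lt_or_ge i (j : ℕ)
  · simp [hx j hj]
  · gcongr
    · exact T.singularValues_nonneg i
    · exact T.singularValues_antitone hj

theorem singularValues_le_norm_sub {S : E →ₗ[𝕜] F} {i : ℕ} (hS : finrank 𝕜 S.range ≤ i) :
    T.singularValues i ≤ ‖(T - S).toContinuousLinearMap‖ := by
  obtain hi | hi := lt_or_ge i (finrank 𝕜 E)
  · obtain ⟨x, hx0, hSx, hx⟩ := exists_ne_zero_map_eq_zero_of_finrank_range_le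
      (rightSingularBasis T).toBasis S (i := ⟨i, hi⟩) hS
    simp only [OrthonormalBasis.coe_toBasis_repr_apply, OrthonormalBasis.repr_apply_apply] at hx
    refine le_of_mul_le_mul_right ?_ (norm_pos_iff.mpr hx0)
    calc T.singularValues i * ‖x‖ ≤ ‖T x‖ := singularValues_mul_le_norm_map T hx
      _ = ‖(T - S).toContinuousLinearMap x‖ := by simp [hSx]
      _ ≤ ‖(T - S).toContinuousLinearMap‖ * ‖x‖ := ContinuousLinearMap.le_opNorm _ x
  · rw [T.singularValues_of_finrank_le hi]
    exact norm_nonneg _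

theorem exists_norm_sub_le_singularValues (i : ℕ) :
    ∃ S : E →ₗ[𝕜] F, finrank 𝕜 S.range ≤ i ∧
      ‖(T - S).toContinuousLinearMap‖ ≤ T.singularValues i := by
  let v (j : {j : Fin (finrank 𝕜 E) // (j : ℕ) < i}) : E := rightSingularBasis T j
  let K : Submodule 𝕜 E := Submodule.span 𝕜 (Set.range v)
  have hK : finrank 𝕜 K ≤ i := by
    refine (finrank_range_le_card v).trans ?_
    rw [Fintype.card_subtype, Fin.card_filter_val_lt]
    exact min_le_right _ _
  refine ⟨T ∘ₗ K.starProjection.toLinearMap, ?_, ?_⟩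
  · rw [LinearMap.range_comp]
    refine (Submodule.finrank_map_le T _).trans ?_
    rwa [Submodule.range_starProjection]
  · refine ContinuousLinearMap.opNorm_le_bound _ (T.singularValues_nonneg i) fun x ↦ ?_
    have hx (j : Fin (finrank 𝕜 E)) (hj : (j : ℕ) < i) :
        inner 𝕜 (rightSingularBasis T j) (Kᗮ.starProjection x) = 0 :=
      Submodule.inner_right_of_mem_orthogonal (K := K) (Submodule.subset_span ⟨⟨j, hj⟩, rfl⟩)
        (Submodule.starProjection_apply_mem _ x)
    calc ‖T x - T (K.starProjection x)‖ = ‖T (Kᗮ.starProjection x)‖ := by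
          rw [← map_sub, Submodule.starProjection_orthogonal_val]
      _ ≤ T.singularValues i * ‖Kᗮ.starProjection x‖ := norm_map_le_singularValues_mul T hx
      _ ≤ T.singularValues i * ‖x‖ := by
          gcongr
          · exact T.singularValues_nonneg i
          · exact Submodule.norm_starProjection_apply_le _ x

theorem isLeast_norm_sub_singularValues (i : ℕ) :
    IsLeast {c | ∃ S : E →ₗ[𝕜] F, finrank 𝕜 S.range < i + 1 ∧
      c = ‖(T - S).toContinuousLinearMap‖} (T.singularValues i) := by
  obtain ⟨S, hS, hTS⟩ := exists_norm_sub_le_singularValues T i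
  refine ⟨⟨S, Nat.lt_succ_of_le hS, (singularValues_le_norm_sub T hS).antisymm hTS⟩, ?_⟩
  rintro _ ⟨S, hS, rfl⟩
  exact singularValues_le_norm_sub T (Nat.le_of_lt_succ hS)

end EckartYoung

theorem sval_succ_eq_singularValues {m n : Type*} [Fintype m] [Fintype n] [DecidableEq n]
    (A : Matrix m n ℝ) (i : ℕ) : sval A (i + 1) = A.toEuclideanLin.singularValues i := by
  rw [sval, ← (isLeast_norm_sub_singularValues A.toEuclideanLin i).csInf_eq]
  congr 1 with c
  refine toEuclideanLin.toEquiv.exists_congr fun B ↦ ?_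
  rw [specNorm, map_sub, B.rank_eq_finrank_range_toLin (EuclideanSpace.basisFun m ℝ).toBasis
    (EuclideanSpace.basisFun n ℝ).toBasis, ← toEuclideanLin_eq_toLin_orthonormal]
  rfl

theorem vol_eq_abs_det {n : Type*} [Fintype n] [DecidableEq n] (A : Matrix n n ℝ) :
    vol A = |A.det| := by
  calc vol A = ∏ i ∈ Finset.range (Fintype.card n), sval A (i + 1) := by
        rw [vol, min_self, Finset.range_eq_Ico, Finset.prod_Ico_add' (fun i ↦ sval A i)]
        rfl
    _ = ∏ i ∈ Finset.range (Module.finrank ℝ (EuclideanSpace ℝ n)),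
          A.toEuclideanLin.singularValues i := by
        simp only [sval_succ_eq_singularValues, finrank_euclideanSpace]
    _ = |A.toEuclideanLin.det| := by
        rw [← LinearMap.normDet_eq_prod_singularValues, LinearMap.normDet_eq_abs_det]
    _ = |A.det| := by rw [toEuclideanLin_eq_toLin_orthonormal, LinearMap.det_toLin]

theorem abs_det_submatrix_le {n R : Type*} [Fintype n] [DecidableEq n] [CommRing R] [LinearOrder R]
    [IsStrictOrderedRing R] (A : Matrix n n R) (σ τ : n → n) :
    |(A.submatrix σ τ).det| ≤ |A.det| := by
  by_cases hσ : σ.Injective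
  · by_cases hτ : τ.Injective
    · exact (abs_det_submatrix_equiv_equiv (Equiv.ofBijective σ hσ.bijective_of_finite)
        (Equiv.ofBijective τ hτ.bijective_of_finite) A).le
    · obtain ⟨p, q, hpq, hne⟩ := Function.not_injective_iff.mp hτ
      rw [det_zero_of_column_eq hne fun i ↦ by
        rw [submatrix_apply, submatrix_apply, hpq], abs_zero]
      exact abs_nonneg _
  · obtain ⟨p, q, hpq, hne⟩ := Function.not_injective_iff.mp hσ
    rw [det_zero_of_row_eq hne (congrArg (fun i j ↦ A i (τ j)) hpq), abs_zero]
    exact abs_nonneg _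

theorem exists_eq_succAbove_comp {k : ℕ} (f : Fin k → Fin (k + 1)) :
    ∃ (b : Fin (k + 1)) (σ : Fin k → Fin k), f = b.succAbove ∘ σ := by
  have hf : ¬ f.Surjective := fun h ↦ by simpa using Fintype.card_le_of_surjective f h
  obtain ⟨b, hb⟩ := not_forall.mp hf
  choose σ hσ using fun p ↦ Fin.exists_succAbove_eq (not_exists.mp hb p)
  exact ⟨b, σ, funext fun p ↦ (hσ p).symm⟩

theorem exists_abs_det_submatrix_le_abs_adjugate {R : Type*} [CommRing R] [LinearOrder R]
    [IsStrictOrderedRing R] {k : ℕ} (A : Matrix (Fin (k + 1)) (Fin (k + 1)) R)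
    (f g : Fin k → Fin (k + 1)) : ∃ i j, |(A.submatrix f g).det| ≤ |A.adjugate i j| := by
  obtain ⟨b, σ, rfl⟩ := exists_eq_succAbove_comp f
  obtain ⟨c, τ, rfl⟩ := exists_eq_succAbove_comp g
  refine ⟨c, b, ?_⟩
  rw [← submatrix_submatrix, adjugate_fin_succ_eq_det_submatrix, abs_mul,
    abs_neg_one_pow, one_mul]
  exact abs_det_submatrix_le _ σ τ

section ExampleMatrix

variable {n : Type*} [Fintype n] [DecidableEq n]

variable (n) in
/-- The square matrix with `card n` on the diagonal and `-1` off the diagonal. For `n` of size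
`k + 1` it is `egA k 1 1` up to reindexing, and `egA k m' n'` arises from it by repeating the last
row and column. -/
def egCore : Matrix n n ℝ :=
  ((Fintype.card n : ℝ) + 1) • 1 - of 1

theorem egCore_apply (i j : n) : egCore n i j = if i = j then (Fintype.card n : ℝ) else -1 := by
  rw [egCore, Matrix.sub_apply, Matrix.smul_apply, one_apply, of_apply, Pi.one_apply, Pi.one_apply,
    smul_eq_mul]
  split_ifs <;> ring

theorem egCore_mul_one_add_ones :
    egCore n * (1 + of 1) = ((Fintype.card n : ℝ) + 1) • 1 := by
  have hJ : (of 1 : Matrix n n ℝ) * of 1 = (Fintype.card n : ℝ) • of 1 := by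
    ext i j
    simp [mul_apply]
  rw [egCore, mul_add, mul_one, sub_mul, hJ, smul_mul_assoc, one_mul, add_smul, add_smul, one_smul,
    one_smul]
  abel

theorem det_egCore_ne_zero : (egCore n).det ≠ 0 := by
  refine det_ne_zero_of_right_inverse (B := ((Fintype.card n : ℝ) + 1)⁻¹ • (1 + of 1)) ?_
  rw [mul_smul_comm, egCore_mul_one_add_ones, inv_smul_smul₀ (by positivity)]

theorem adjugate_egCore_apply (i j : n) :
    (egCore n).adjugate i j =
      (egCore n).det / (Fintype.card n + 1) * if i = j then 2 else 1 := by
  have h : ((Fintype.card n : ℝ) + 1) • (egCore n).adjugate = (egCore n).det • (1 + of 1) :=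
    calc ((Fintype.card n : ℝ) + 1) • (egCore n).adjugate
        = (egCore n).adjugate * (egCore n * (1 + of 1)) := by
          rw [egCore_mul_one_add_ones, mul_smul_comm, mul_one]
      _ = (egCore n).det • (1 + of 1) := by
          rw [← mul_assoc, adjugate_mul, smul_mul_assoc, one_mul]
  have hij : (1 + of 1 : Matrix n n ℝ) i j = if i = j then 2 else 1 := by
    rw [Matrix.add_apply, one_apply, of_apply, Pi.one_apply, Pi.one_apply]
    split_ifs <;> norm_num
  have h' := congrFun (congrFun h i) j
  rw [Matrix.smul_apply, Matrix.smul_apply, hij, smul_eq_mul, smul_eq_mul] at h'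
  rw [div_mul_eq_mul_div, ← h', mul_div_cancel_left₀ _ (by positivity)]

theorem adjugate_egCore_self_ne_zero (i : n) : (egCore n).adjugate i i ≠ 0 := by
  rw [adjugate_egCore_apply, if_pos rfl]
  exact mul_ne_zero (div_ne_zero det_egCore_ne_zero (by positivity)) two_ne_zero

theorem abs_adjugate_egCore_le (i j l : n) :
    |(egCore n).adjugate i j| ≤ |(egCore n).adjugate l l| := by
  rw [adjugate_egCore_apply, adjugate_egCore_apply, if_pos rfl, abs_mul, abs_mul]
  gcongr
  split_ifs <;> norm_num

end ExampleMatrix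

/-- The row (or column) of `egCore (Fin (k + 1))` that a row (or column) of `egA` repeats: all
indices beyond the first `k` share the last one. -/
def egCoreIndex (k l : ℕ) : Fin k ⊕ Fin l → Fin (k + 1) :=
  Sum.elim Fin.castSucc fun _ ↦ Fin.last k

theorem egA11_eq_submatrix_egCore (k : ℕ) :
    egA11 k = (egCore (Fin (k + 1))).submatrix (Fin.last k).succAbove (Fin.last k).succAbove := by
  ext i j
  simp [egA11, egCore_apply]

theorem egA_eq_submatrix_egCore (k m' n' : ℕ) :
    egA k m' n' = (egCore (Fin (k + 1))).submatrix (egCoreIndex k m') (egCoreIndex k n') := by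
  ext (i | i) (j | j) <;>
    simp [egA, egA11, egCore_apply, egCoreIndex, Fin.castSucc_ne_last,
      (Fin.castSucc_ne_last _).symm]

theorem det_egA11 (k : ℕ) :
    (egA11 k).det = (egCore (Fin (k + 1))).adjugate (Fin.last k) (Fin.last k) := by
  rw [adjugate_fin_succ_eq_det_submatrix, ← egA11_eq_submatrix_egCore,
    Even.neg_one_pow ⟨_, rfl⟩, one_mul]

theorem statement_15_general (k m' n' : ℕ) :
    (egA11 k).det ≠ 0 ∧
    ∀ (r : Fin k → Fin k ⊕ Fin m') (c : Fin k → Fin k ⊕ Fin n'),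
      vol ((egA k m' n').submatrix r c) ≤ vol (egA11 k) := by
  refine ⟨det_egA11 k ▸ adjugate_egCore_self_ne_zero _, fun r c ↦ ?_⟩
  rw [vol_eq_abs_det, vol_eq_abs_det, egA_eq_submatrix_egCore, submatrix_submatrix, det_egA11]
  obtain ⟨i, j, hij⟩ := exists_abs_det_submatrix_le_abs_adjugate (egCore (Fin (k + 1)))
    (egCoreIndex k m' ∘ r) (egCoreIndex k n' ∘ c)
  exact hij.trans (abs_adjugate_egCore_le i j _)

theorem statement_15 {k m' n' : ℕ} (hk : 2 ≤ k) :
    (egA11 k).det ≠ 0 ∧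
    ∀ (r : Fin k → Fin k ⊕ Fin m') (c : Fin k → Fin k ⊕ Fin n'),
      DiffOne Sum.inl r → DiffOne Sum.inl c →
      vol ((egA k m' n').submatrix r c) ≤ vol (egA11 k) :=
  ⟨(statement_15_general k m' n').1, fun r c _ _ ↦ (statement_15_general k m' n').2 r c⟩
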